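/- Let μ be the nonautonomous Bernoulli measure on Σ_0^∞(m) generated by positive probability vectors p_j, and suppose lim_{n→∞} m_n/n^{1-α} < 1 for some α > 0. Then for μ-almost every ω, the lower local entropy h̲_μ(σ,ω) equals liminf_{n→∞} (1/n) ∑_{j=0}^{n-1} H(p_j) and the upper local entropy h̄_μ(σ,ω) equals limsup_{n→∞} (1/n) ∑_{j=0}^{n-1} H(p_j), where H(p_j) = -∑_{i=1}^{m_j} p_{j,i} log p_{j,i}. -/

import Mathlib

open MeasureTheory Filter Topology

/-
Under `μ` the coordinates are independent, so `-log μ([ω|N])` is a sum of independent variables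
`-log p_j(ω_j)` with means `H(p_j)`. Whatever the vectors `p_j`, the second moments are at most
`2 log² m_j + 8`, and polynomial growth of `m_j` makes `∑ (log m_j / j)²` converge. Kolmogorov's
strong law then gives `-log μ([ω|N]) = ∑_{j<N} H(p_j) + o(N)` almost surely. Passing from
`N = n + ⌊-log ε⌋` to `N = n` costs a fixed number of entropies `H(p_j) ≤ log m_j = o(j)`, so for
every `ε` the decay rate differs from the average entropy by a null sequence.
-/

open ProbabilityTheory Asymptotics

section RealLimits

lemma upperBounds_eq_of_forall_sub_mem {S T : Set ℝ} (hST : ∀ a ∈ S, ∀ ε > 0, a - ε ∈ T)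
    (hTS : ∀ a ∈ T, ∀ ε > 0, a - ε ∈ S) : upperBounds S = upperBounds T := by
  have subset {S T : Set ℝ} (hST : ∀ a ∈ S, ∀ ε > 0, a - ε ∈ T) :
      upperBounds T ⊆ upperBounds S := fun _ hb a ha =>
    le_of_forall_pos_le_add fun ε hε => sub_le_iff_le_add.1 (hb (hST a ha ε hε))
  exact (subset hTS).antisymm (subset hST)

lemma sSup_eq_of_forall_sub_mem {S T : Set ℝ} (hST : ∀ a ∈ S, ∀ ε > 0, a - ε ∈ T)
    (hTS : ∀ a ∈ T, ∀ ε > 0, a - ε ∈ S) : sSup S = sSup T := by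
  have hupper := upperBounds_eq_of_forall_sub_mem hST hTS
  have hbdd : BddAbove S ↔ BddAbove T := by rw [BddAbove, BddAbove, hupper]
  rcases T.eq_empty_or_nonempty with rfl | hT
  · rw [Set.eq_empty_of_forall_notMem fun a ha => hST a ha 1 one_pos]
  have hS : S.Nonempty := ⟨_, hTS _ hT.some_mem 1 one_pos⟩
  by_cases hSb : BddAbove S
  · have hT' : IsLUB S (sSup T) := by
      rw [IsLUB, hupper]
      exact isLUB_csSup hT (hbdd.1 hSb)
    exact (isLUB_csSup hS hSb).unique hT'
  · rw [Real.sSup_of_not_bddAbove hSb, Real.sSup_of_not_bddAbove (mt hbdd.2 hSb)]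

-- This covers unbounded `f` and `g` as well, where both real `liminf`s take the same junk value.
lemma liminf_eq_of_tendsto_sub_zero {ι : Type*} {F : Filter ι} {f g : ι → ℝ}
    (h : Tendsto (fun i => f i - g i) F (𝓝 0)) : liminf f F = liminf g F := by
  have sub_mem {f g : ι → ℝ} (h : Tendsto (fun i => f i - g i) F (𝓝 0)) :
      ∀ a ∈ {a | ∀ᶠ i in F, a ≤ f i}, ∀ ε > 0, a - ε ∈ {a | ∀ᶠ i in F, a ≤ g i} := by
    intro a ha ε hε
    filter_upwards [ha, h.eventually (gt_mem_nhds hε)] with i hai hi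
    linarith
  rw [liminf_eq, liminf_eq]
  exact sSup_eq_of_forall_sub_mem (sub_mem h) (sub_mem (by simpa using h.neg))

lemma limsup_eq_neg_liminf_neg {ι : Type*} {F : Filter ι} (f : ι → ℝ) :
    limsup f F = -liminf (fun i => -f i) F := by
  rw [limsup_eq, liminf_eq, Real.sInf_def]
  congr 2
  ext a
  simp [le_neg]

lemma limsup_eq_of_tendsto_sub_zero {ι : Type*} {F : Filter ι} {f g : ι → ℝ}
    (h : Tendsto (fun i => f i - g i) F (𝓝 0)) : limsup f F = limsup g F := by
  rw [limsup_eq_neg_liminf_neg, limsup_eq_neg_liminf_neg,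
    liminf_eq_of_tendsto_sub_zero (f := fun i => -f i) (g := fun i => -g i)]
  simpa [neg_add_eq_sub] using h.neg

lemma isBigO_natCast_add (k : ℕ) :
    (fun n : ℕ => ((n + k : ℕ) : ℝ)) =O[atTop] fun n => (n : ℝ) := by
  refine .of_bound (1 + k) ?_
  filter_upwards [eventually_ge_atTop 1] with n hn
  have hn' : (1 : ℝ) ≤ n := by exact_mod_cast hn
  rw [Real.norm_natCast, Real.norm_natCast, Nat.cast_add]
  nlinarith [k.cast_nonneg (α := ℝ)]

lemma isLittleO_natCast_comp_add {E : Type*} [Norm E] {u : ℕ → E}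
    (hu : u =o[atTop] fun n => (n : ℝ)) (k : ℕ) :
    (fun n => u (n + k)) =o[atTop] fun n => (n : ℝ) :=
  (hu.comp_tendsto (tendsto_add_atTop_nat k)).trans_isBigO (isBigO_natCast_add k)

lemma isLittleO_of_summable_div_sq {x : ℕ → ℝ}
    (h : Summable fun n : ℕ => (x n / ((n : ℝ) + 1)) ^ 2) : x =o[atTop] fun n => (n : ℝ) := by
  have hsq : (fun n => x n ^ 2) =o[atTop] fun n : ℕ => ((n + 1 : ℕ) : ℝ) ^ 2 := by
    refine (isLittleO_iff_tendsto fun n hn => absurd hn (by positivity)).2 ?_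
    simpa only [div_pow, Nat.cast_succ] using h.tendsto_atTop_zero
  exact (hsq.of_pow two_ne_zero).trans_isBigO (isBigO_natCast_add 1)

-- Kronecker's lemma for the weights `i + 1`: by Abel summation the sum is
-- `n * s n - ∑ i < n, s i`, where `s` denotes the convergent partial sums.
lemma isLittleO_sum_of_tendsto_sum_div {x : ℕ → ℝ} {c : ℝ}
    (h : Tendsto (fun n => ∑ i ∈ Finset.range n, x i / (i + 1)) atTop (𝓝 c)) :
    (fun n => ∑ i ∈ Finset.range n, x i) =o[atTop] fun n => (n : ℝ) := by
  set s : ℕ → ℝ := fun n => ∑ i ∈ Finset.range n, x i / (i + 1)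
  have hsum (n : ℕ) : ∑ i ∈ Finset.range n, x i = n * s n - ∑ i ∈ Finset.range n, s i := by
    induction n with
    | zero => simp
    | succ n ih =>
      have hs : s (n + 1) = s n + x n / (n + 1) := Finset.sum_range_succ _ _
      rw [Finset.sum_range_succ, Finset.sum_range_succ, ih, hs]
      push_cast
      field_simp
      ring
  refine (isLittleO_iff_tendsto' ?_).2 ?_
  · filter_upwards [eventually_ne_atTop 0] with n hn h0
    exact absurd (Nat.cast_eq_zero.1 h0) hn
  · rw [← sub_self c]
    refine (h.sub h.cesaro).congr' ?_
    filter_upwards [eventually_ne_atTop 0] with n hn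
    rw [hsum]
    field_simp

lemma isBigO_rpow_of_tendsto_div {u : ℕ → ℝ} {r L : ℝ}
    (h : Tendsto (fun n : ℕ => u n / (n : ℝ) ^ r) atTop (𝓝 L)) :
    u =O[atTop] fun n => (n : ℝ) ^ r := by
  refine isBigO_of_div_tendsto_nhds ?_ L h
  filter_upwards [eventually_gt_atTop 0] with n hn h0
  exact absurd h0 (by positivity)

lemma isBigO_log_natCast_of_isBigO_rpow {m : ℕ → ℕ} {r : ℝ}
    (h : (fun n => (m n : ℝ)) =O[atTop] fun n => (n : ℝ) ^ r) {s : ℝ} (hs : 0 < s) :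
    (fun n => Real.log (m n)) =O[atTop] fun n : ℕ => (n : ℝ) ^ s := by
  set δ : ℝ := s / (|r| + 1) with hδ
  have hδ0 : 0 < δ := by positivity
  have hrδ : r * δ ≤ s := by
    rw [hδ, mul_div_assoc', div_le_iff₀ (by positivity)]
    nlinarith [le_abs_self r]
  have hlog : (fun n => Real.log (m n)) =O[atTop] fun n => (m n : ℝ) ^ δ := by
    refine .of_bound δ⁻¹ (.of_forall fun n => ?_)
    rw [Real.norm_of_nonneg (Real.log_natCast_nonneg _), Real.norm_of_nonneg (by positivity),
      inv_mul_eq_div]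
    exact Real.log_natCast_le_rpow_div (m n) hδ0
  have hpow : (fun n => (m n : ℝ) ^ δ) =O[atTop] fun n : ℕ => ((n : ℝ) ^ r) ^ δ :=
    h.rpow hδ0.le (.of_forall fun n => by positivity)
  refine (hlog.trans hpow).trans (.of_bound 1 ?_)
  filter_upwards [eventually_ge_atTop 1] with n hn
  rw [← Real.rpow_mul n.cast_nonneg, Real.norm_of_nonneg (by positivity),
    Real.norm_of_nonneg (by positivity), one_mul]
  exact Real.rpow_le_rpow_of_exponent_le (by exact_mod_cast hn) hrδ

lemma summable_log_div_sq_of_isBigO_rpow {m : ℕ → ℕ} {r : ℝ}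
    (h : (fun n => (m n : ℝ)) =O[atTop] fun n => (n : ℝ) ^ r) :
    Summable fun n : ℕ => (Real.log (m n) / ((n : ℝ) + 1)) ^ 2 := by
  refine summable_of_isBigO_nat (g := fun n : ℕ => (n : ℝ) ^ (-3 / 2 : ℝ))
    (Real.summable_nat_rpow.2 (by norm_num)) ?_
  have hinv : (fun n : ℕ => ((n : ℝ) + 1)⁻¹) =O[atTop] fun n => (n : ℝ)⁻¹ := by
    refine .of_bound 1 ?_
    filter_upwards [eventually_gt_atTop 0] with n hn
    rw [Real.norm_of_nonneg (by positivity), Real.norm_of_nonneg (by positivity), one_mul]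
    gcongr
    linarith
  have hlog := isBigO_log_natCast_of_isBigO_rpow h (s := 1 / 4) (by norm_num)
  refine ((hlog.mul hinv).pow 2).trans_eventuallyEq ?_
  filter_upwards [eventually_gt_atTop 0] with n hn
  have hn' : (0 : ℝ) < n := by exact_mod_cast hn
  rw [← Real.rpow_neg_one, ← Real.rpow_add hn', ← Real.rpow_mul_natCast hn'.le]
  norm_num

end RealLimits

section StrongLaw

variable {Ω : Type*} [MeasurableSpace Ω] {μ : Measure Ω} {X : ℕ → Ω → ℝ}

lemma martingale_sum_of_iIndepFun (hX : ∀ n, StronglyMeasurable (X n))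
    (hint : ∀ n, Integrable (X n) μ) (hind : iIndepFun X μ) (hmean : ∀ n, μ[X n] = 0) :
    Martingale (fun n => ∑ i ∈ Finset.range (n + 1), X i) (Filtration.natural X hX) μ := by
  have := hind.isProbabilityMeasure
  refine martingale_of_condExp_sub_eq_zero_nat (fun n => ?_)
    (fun n => integrable_finsetSum' _ fun i _ => hint i) fun n => ?_
  · refine Finset.stronglyMeasurable_sum _ fun i hi => ?_
    exact (Filtration.stronglyAdapted_natural hX i).mono
      ((Filtration.natural X hX).mono (Nat.lt_succ_iff.1 (Finset.mem_range.1 hi)))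
  · rw [Finset.sum_range_succ_sub_sum]
    filter_upwards [hind.condExp_natural_ae_eq_of_lt hX n.lt_succ_self] with ω hω
    simpa [hmean] using hω

lemma eLpNorm_one_le_one_add_variance [IsProbabilityMeasure μ] {Y : Ω → ℝ} (hY : MemLp Y 2 μ)
    (hmean : μ[Y] = 0) : eLpNorm Y 1 μ ≤ ENNReal.ofReal (1 + Var[Y; μ]) := by
  have hsq := hY.integrable_sq
  rw [eLpNorm_one_eq_lintegral_enorm,
    ← ofReal_integral_norm_eq_lintegral_enorm (hY.integrable one_le_two),
    variance_of_integral_eq_zero hY.1.aemeasurable hmean]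
  refine ENNReal.ofReal_le_ofReal ?_
  calc ∫ ω, ‖Y ω‖ ∂μ ≤ ∫ ω, (1 + Y ω ^ 2) ∂μ := by
        refine integral_mono (hY.integrable one_le_two).norm ((integrable_const 1).add hsq)
          fun ω => ?_
        rw [Real.norm_eq_abs, ← sq_abs]
        nlinarith [sq_nonneg (|Y ω| - 1)]
    _ = 1 + ∫ ω, Y ω ^ 2 ∂μ := by
        rw [integral_add (integrable_const 1) hsq]
        simp

-- Kolmogorov's convergence criterion: the partial sums form an `L²`-bounded martingale.
theorem ae_exists_tendsto_sum_of_summable_variance (hX : ∀ n, StronglyMeasurable (X n))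
    (hX2 : ∀ n, MemLp (X n) 2 μ) (hind : iIndepFun X μ) (hmean : ∀ n, μ[X n] = 0)
    (hvar : Summable fun n => Var[X n; μ]) :
    ∀ᵐ ω ∂μ, ∃ c, Tendsto (fun n => ∑ i ∈ Finset.range n, X i ω) atTop (𝓝 c) := by
  have := hind.isProbabilityMeasure
  have hint (n : ℕ) : Integrable (X n) μ := (hX2 n).integrable one_le_two
  have hbound (n : ℕ) : eLpNorm (∑ i ∈ Finset.range (n + 1), X i) 1 μ ≤
      (1 + ∑' i, Var[X i; μ]).toNNReal := by
    refine (eLpNorm_one_le_one_add_variance (memLp_finsetSum' _ fun i _ => hX2 i) ?_).trans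
      (ENNReal.ofReal_le_ofReal ?_)
    · simp [integral_finsetSum _ fun i _ => hint i, hmean]
    · rw [IndepFun.variance_sum (fun i _ => hX2 i) fun i _ j _ hij => hind.indepFun hij]
      gcongr
      exact hvar.sum_le_tsum _ fun i _ => variance_nonneg _ _
  filter_upwards [(martingale_sum_of_iIndepFun hX hint hind hmean).submartingale
    |>.exists_ae_tendsto_of_bdd hbound] with ω ⟨c, hc⟩
  exact ⟨c, (tendsto_add_atTop_iff_nat 1).1 (by simpa only [Finset.sum_apply] using hc)⟩

-- Kolmogorov's strong law: Kronecker's lemma applied to the series of `(X n - μ[X n]) / (n + 1)`.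
theorem ae_isLittleO_sum_sub_integral (hX : ∀ n, StronglyMeasurable (X n))
    (hX2 : ∀ n, MemLp (X n) 2 μ) (hind : iIndepFun X μ)
    (hvar : Summable fun n : ℕ => Var[X n; μ] / ((n : ℝ) + 1) ^ 2) :
    ∀ᵐ ω ∂μ, (fun n => ∑ i ∈ Finset.range n, (X i ω - μ[X i])) =o[atTop] fun n => (n : ℝ) := by
  have := hind.isProbabilityMeasure
  set Y : ℕ → Ω → ℝ := fun n ω => (X n ω - μ[X n]) / ((n : ℝ) + 1) with hYdef
  have hY (n : ℕ) : StronglyMeasurable (Y n) :=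
    ((hX n).sub stronglyMeasurable_const).div stronglyMeasurable_const
  have hY2 (n : ℕ) : MemLp (Y n) 2 μ := by
    simpa only [hYdef, div_eq_inv_mul, Pi.sub_apply] using
      ((hX2 n).sub (memLp_const μ[X n])).const_mul ((n : ℝ) + 1)⁻¹
  have hYind : iIndepFun Y μ :=
    hind.comp (fun n x => (x - ∫ ω, X n ω ∂μ) / ((n : ℝ) + 1)) fun n => by fun_prop
  have hYmean (n : ℕ) : μ[Y n] = 0 := by
    simp [hYdef, integral_div, integral_sub ((hX2 n).integrable one_le_two) (integrable_const _)]
  have hYvar (n : ℕ) : Var[X n; μ] / ((n : ℝ) + 1) ^ 2 = Var[Y n; μ] := by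
    simp only [hYdef, div_eq_mul_inv]
    rw [variance_mul_const, variance_sub_const (hX2 n).1, inv_pow]
  have hconv := ae_exists_tendsto_sum_of_summable_variance hY hY2 hYind hYmean (hvar.congr hYvar)
  filter_upwards [hconv] with ω ⟨c, hc⟩
  exact isLittleO_sum_of_tendsto_sum_div hc

end StrongLaw

section Entropy

lemma mul_sq_log_le_four {t : ℝ} (h0 : 0 ≤ t) (h1 : t ≤ 1) : t * Real.log t ^ 2 ≤ 4 := by
  rcases h0.eq_or_lt with rfl | h0
  · simp
  calc t * Real.log t ^ 2 = |Real.log t * t ^ (1 / 2 : ℝ)| ^ 2 := by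
        rw [sq_abs, mul_pow, ← Real.sqrt_eq_rpow, Real.sq_sqrt h0.le, mul_comm]
    _ ≤ (1 / (1 / 2)) ^ 2 := by
        gcongr
        exact (Real.abs_log_mul_self_rpow_lt t _ h0 h1 one_half_pos).le
    _ = 4 := by norm_num

-- Either `M⁻¹ ≤ x`, and then `|log x| ≤ log M`, or `x * M ≤ 1` and `log x = log (x * M) - log M`.
lemma mul_sq_log_le {x M : ℝ} (h0 : 0 ≤ x) (h1 : x ≤ 1) (hM : 0 < M) :
    x * Real.log x ^ 2 ≤ 2 * Real.log M ^ 2 * x + 8 / M := by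
  rcases h0.eq_or_lt with rfl | h0
  · simp only [zero_mul, mul_zero, zero_add]
    positivity
  have hlog : Real.log (x * M) = Real.log x + Real.log M := Real.log_mul h0.ne' hM.ne'
  rcases le_total (x * M) 1 with hxM | hxM
  · have hsq : Real.log x ^ 2 ≤ 2 * Real.log M ^ 2 + 2 * Real.log (x * M) ^ 2 := by
      rw [hlog]
      nlinarith [sq_nonneg (Real.log x + 2 * Real.log M)]
    calc x * Real.log x ^ 2 ≤ x * (2 * Real.log M ^ 2 + 2 * Real.log (x * M) ^ 2) := by gcongr
      _ = 2 * Real.log M ^ 2 * x + 2 * (x * M * Real.log (x * M) ^ 2) / M := by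
          field_simp
      _ ≤ 2 * Real.log M ^ 2 * x + 2 * 4 / M := by
          gcongr
          exact mul_sq_log_le_four (by positivity) hxM
      _ = 2 * Real.log M ^ 2 * x + 8 / M := by norm_num
  · have hsq : Real.log x ^ 2 ≤ Real.log M ^ 2 := by
      nlinarith [Real.log_nonneg hxM, Real.log_nonpos h0.le h1]
    calc x * Real.log x ^ 2 ≤ x * Real.log M ^ 2 := by gcongr
      _ ≤ 2 * Real.log M ^ 2 * x + 8 / M := by
          have : 0 ≤ 8 / M := by positivity
          nlinarith [mul_nonneg h0.le (sq_nonneg (Real.log M))]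

variable {ι : Type*} [Fintype ι] {q : ι → ℝ}

lemma nonempty_of_mem_stdSimplex (hq : q ∈ stdSimplex ℝ ι) : Nonempty ι := by
  by_contra h
  have := not_nonempty_iff.1 h
  simpa using hq.2

lemma le_one_of_mem_stdSimplex (hq : q ∈ stdSimplex ℝ ι) (i : ι) : q i ≤ 1 :=
  hq.2 ▸ Finset.single_le_sum (fun j _ => hq.1 j) (Finset.mem_univ i)

lemma sum_mul_sq_log_le (hq : q ∈ stdSimplex ℝ ι) :
    ∑ i, q i * Real.log (q i) ^ 2 ≤ 2 * Real.log (Fintype.card ι) ^ 2 + 8 := by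
  have := nonempty_of_mem_stdSimplex hq
  have hcard : (0 : ℝ) < Fintype.card ι := by exact_mod_cast Fintype.card_pos
  calc ∑ i, q i * Real.log (q i) ^ 2
      ≤ ∑ i, (2 * Real.log (Fintype.card ι) ^ 2 * q i + 8 / Fintype.card ι) :=
        Finset.sum_le_sum fun i _ => mul_sq_log_le (hq.1 i) (le_one_of_mem_stdSimplex hq i) hcard
    _ = 2 * Real.log (Fintype.card ι) ^ 2 + 8 := by
        rw [Finset.sum_add_distrib, ← Finset.mul_sum, hq.2, Finset.sum_const, Finset.card_univ,
          nsmul_eq_mul, mul_div_cancel₀ _ hcard.ne', mul_one]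

/-- The Shannon entropy `H(q)` of a probability vector `q`, in nats. Coordinates `q i = 0`
contribute `0`, since `Real.log 0 = 0`. -/
noncomputable def shannonEntropy (q : ι → ℝ) : ℝ :=
  -∑ i, q i * Real.log (q i)

lemma shannonEntropy_eq_sum_negMulLog (q : ι → ℝ) :
    shannonEntropy q = ∑ i, Real.negMulLog (q i) := by
  simp [shannonEntropy, Real.negMulLog]

lemma shannonEntropy_nonneg (hq : q ∈ stdSimplex ℝ ι) : 0 ≤ shannonEntropy q := by
  rw [shannonEntropy_eq_sum_negMulLog]
  exact Finset.sum_nonneg fun i _ => Real.negMulLog_nonneg (hq.1 i) (le_one_of_mem_stdSimplex hq i)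

lemma shannonEntropy_le_log_card (hq : q ∈ stdSimplex ℝ ι) :
    shannonEntropy q ≤ Real.log (Fintype.card ι) := by
  have := nonempty_of_mem_stdSimplex hq
  have hcard : (0 : ℝ) < Fintype.card ι := by exact_mod_cast Fintype.card_pos
  have jensen := Real.concaveOn_negMulLog.le_map_sum (t := Finset.univ)
    (w := fun _ : ι => (Fintype.card ι : ℝ)⁻¹) (p := q) (fun _ _ => by positivity)
    (by simp [hcard.ne']) fun i _ => hq.1 i
  simp only [smul_eq_mul, ← Finset.mul_sum, hq.2, mul_one, ← shannonEntropy_eq_sum_negMulLog]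
    at jensen
  rw [Real.negMulLog, Real.log_inv, neg_mul_neg] at jensen
  exact le_of_mul_le_mul_left jensen (inv_pos.2 hcard)

/-- The probability mass function with weights a point `q` of the standard simplex. -/
noncomputable def pmfOfMemStdSimplex (hq : q ∈ stdSimplex ℝ ι) : PMF ι :=
  PMF.ofFintype (fun i => ENNReal.ofReal (q i)) <| by
    rw [← ENNReal.ofReal_sum_of_nonneg fun i _ => hq.1 i, hq.2, ENNReal.ofReal_one]

variable [MeasurableSpace ι] [MeasurableSingletonClass ι]

lemma toMeasure_pmfOfMemStdSimplex_singleton (hq : q ∈ stdSimplex ℝ ι) (i : ι) :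
    (pmfOfMemStdSimplex hq).toMeasure {i} = ENNReal.ofReal (q i) :=
  PMF.toMeasure_apply_singleton _ _ (measurableSet_singleton i)

lemma integral_pmfOfMemStdSimplex (hq : q ∈ stdSimplex ℝ ι) (f : ι → ℝ) :
    ∫ i, f i ∂(pmfOfMemStdSimplex hq).toMeasure = ∑ i, q i * f i := by
  rw [PMF.integral_eq_sum]
  simp [pmfOfMemStdSimplex, ENNReal.toReal_ofReal (hq.1 _)]

lemma ae_ne_zero_pmfOfMemStdSimplex (hq : q ∈ stdSimplex ℝ ι) :
    ∀ᵐ i ∂(pmfOfMemStdSimplex hq).toMeasure, q i ≠ 0 := by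
  rw [ae_iff_of_countable]
  intro i hi h0
  exact hi (by rw [toMeasure_pmfOfMemStdSimplex_singleton, h0, ENNReal.ofReal_zero])

end Entropy

section Bernoulli

lemma frestrictLe_preimage_singleton {α : ℕ → Type*} (ω : ∀ j, α j) (n : ℕ) :
    Preorder.frestrictLe n ⁻¹' {Preorder.frestrictLe n ω} = PiNat.cylinder ω (n + 1) := by
  ext ϑ
  simp [funext_iff, PiNat.cylinder]

variable {α : ℕ → Type*} [∀ j, MeasurableSpace (α j)] {p : ∀ j, α j → ℝ} {μ : Measure (∀ j, α j)}

/-- `μ` is the nonautonomous Bernoulli measure generated by the vectors `p j`: the cylinder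
`[ω₀ ⋯ ωₙ₋₁]` has measure `p₀(ω₀) ⋯ pₙ₋₁(ωₙ₋₁)`. Words are encoded by the infinite sequences
extending them. -/
def IsBernoulliMeasure (p : ∀ j, α j → ℝ) (μ : Measure (∀ j, α j)) : Prop :=
  ∀ ω n, μ (PiNat.cylinder ω n) = ∏ j ∈ Finset.range n, ENNReal.ofReal (p j (ω j))

lemma isBernoulliMeasure_of_forall_fin
    (hμ : ∀ (n : ℕ) (u : ∀ j : Fin n, α j),
      μ {ω | ∀ j : Fin n, ω j = u j} = ∏ j : Fin n, ENNReal.ofReal (p j (u j))) :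
    IsBernoulliMeasure p μ := fun ω n => by
  simpa only [PiNat.cylinder, Fin.forall_iff,
    ← Finset.prod_range fun j => ENNReal.ofReal (p j (ω j))] using hμ n fun j => ω j

lemma IsBernoulliMeasure.neg_log_cylinder (hμ : IsBernoulliMeasure p μ) {ω : ∀ j, α j}
    (hω : ∀ j, 0 < p j (ω j)) (n : ℕ) :
    -Real.log (μ (PiNat.cylinder ω n)).toReal = ∑ j ∈ Finset.range n, -Real.log (p j (ω j)) := by
  have htoReal (j : ℕ) : (ENNReal.ofReal (p j (ω j))).toReal = p j (ω j) :=
    ENNReal.toReal_ofReal (hω j).le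
  rw [hμ, ENNReal.toReal_prod, Finset.prod_congr rfl fun j _ => htoReal j,
    Real.log_prod fun j _ => (hω j).ne', Finset.sum_neg_distrib]

variable [∀ j, Fintype (α j)] [∀ j, MeasurableSingletonClass (α j)]

lemma IsBernoulliMeasure.eq_infinitePi (hμ : IsBernoulliMeasure p μ)
    (hp : ∀ j, p j ∈ stdSimplex ℝ (α j)) :
    μ = Measure.infinitePi fun j => (pmfOfMemStdSimplex (hp j)).toMeasure := by
  have (j : ℕ) : Nonempty (α j) := nonempty_of_mem_stdSimplex (hp j)
  set ν : ∀ j, Measure (α j) := fun j => (pmfOfMemStdSimplex (hp j)).toMeasure with hν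
  have hlim : IsProjectiveLimit μ fun I : Finset ℕ => Measure.pi fun i : I => ν i := by
    refine (isProjectiveLimit_nat_iff (isProjectiveMeasureFamily_pi ν) μ).2
      fun n => Measure.ext_of_singleton fun v => ?_
    obtain ⟨ω, rfl⟩ : ∃ ω, Preorder.frestrictLe n ω = v := Subtype.surjective_restrict _ v
    rw [Measure.map_apply (by fun_prop) (measurableSet_singleton _),
      frestrictLe_preimage_singleton, hμ, Measure.pi_singleton, Nat.range_succ_eq_Iic,
      ← Finset.prod_coe_sort]
    simp only [hν, toMeasure_pmfOfMemStdSimplex_singleton, Preorder.frestrictLe_apply]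
  exact hlim.unique (Measure.isProjectiveLimit_infinitePi ν)

lemma IsBernoulliMeasure.measurePreserving_eval (hμ : IsBernoulliMeasure p μ)
    (hp : ∀ j, p j ∈ stdSimplex ℝ (α j)) (j : ℕ) :
    MeasurePreserving (fun ω => ω j) μ (pmfOfMemStdSimplex (hp j)).toMeasure := by
  rw [hμ.eq_infinitePi hp]
  exact measurePreserving_eval_infinitePi _ j

lemma IsBernoulliMeasure.integral_eval (hμ : IsBernoulliMeasure p μ)
    (hp : ∀ j, p j ∈ stdSimplex ℝ (α j)) (j : ℕ) (f : α j → ℝ) :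
    ∫ ω, f (ω j) ∂μ = ∑ i, p j i * f i := by
  have heval := hμ.measurePreserving_eval hp j
  rw [← integral_pmfOfMemStdSimplex (hp j), ← heval.map_eq,
    integral_map heval.aemeasurable .of_discrete]

lemma IsBernoulliMeasure.iIndepFun_eval (hμ : IsBernoulliMeasure p μ)
    (hp : ∀ j, p j ∈ stdSimplex ℝ (α j)) {β : ℕ → Type*} [∀ j, MeasurableSpace (β j)]
    (f : ∀ j, α j → β j) : iIndepFun (fun j ω => f j (ω j)) μ := by
  rw [hμ.eq_infinitePi hp]
  exact iIndepFun_infinitePi fun _ => .of_discrete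

lemma IsBernoulliMeasure.ae_forall_pos (hμ : IsBernoulliMeasure p μ)
    (hp : ∀ j, p j ∈ stdSimplex ℝ (α j)) : ∀ᵐ ω ∂μ, ∀ j, 0 < p j (ω j) := by
  refine ae_all_iff.2 fun j => ?_
  filter_upwards [(hμ.measurePreserving_eval hp j).quasiMeasurePreserving.ae
    (ae_ne_zero_pmfOfMemStdSimplex (hp j))] with ω hω
  exact ((hp j).1 _).lt_of_ne' hω

lemma IsBernoulliMeasure.integral_neg_log (hμ : IsBernoulliMeasure p μ)
    (hp : ∀ j, p j ∈ stdSimplex ℝ (α j)) (j : ℕ) :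
    ∫ ω, -Real.log (p j (ω j)) ∂μ = shannonEntropy (p j) := by
  rw [hμ.integral_eval hp j fun i => -Real.log (p j i), shannonEntropy]
  simp only [mul_neg, Finset.sum_neg_distrib]

lemma IsBernoulliMeasure.variance_neg_log_le (hμ : IsBernoulliMeasure p μ)
    (hp : ∀ j, p j ∈ stdSimplex ℝ (α j)) (j : ℕ) :
    Var[fun ω => -Real.log (p j (ω j)); μ] ≤ 2 * Real.log (Fintype.card (α j)) ^ 2 + 8 := by
  have := (hμ.iIndepFun_eval hp fun j i => -Real.log (p j i)).isProbabilityMeasure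
  have hmeas : Measurable fun ω : ∀ j, α j => -Real.log (p j (ω j)) :=
    (Measurable.of_discrete (f := fun i => -Real.log (p j i))).comp (measurable_pi_apply j)
  calc Var[fun ω => -Real.log (p j (ω j)); μ]
      ≤ ∫ ω, (-Real.log (p j (ω j))) ^ 2 ∂μ :=
        variance_le_expectation_sq hmeas.aestronglyMeasurable
    _ = ∑ i, p j i * Real.log (p j i) ^ 2 := by
        simp only [neg_sq]
        exact hμ.integral_eval hp j fun i => Real.log (p j i) ^ 2
    _ ≤ 2 * Real.log (Fintype.card (α j)) ^ 2 + 8 := sum_mul_sq_log_le (hp j)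

theorem IsBernoulliMeasure.ae_isLittleO_sum_neg_log_sub_shannonEntropy
    (hμ : IsBernoulliMeasure p μ) (hp : ∀ j, p j ∈ stdSimplex ℝ (α j))
    (hcard : Summable fun n : ℕ => (Real.log (Fintype.card (α n)) / ((n : ℝ) + 1)) ^ 2) :
    ∀ᵐ ω ∂μ, (fun n => ∑ j ∈ Finset.range n, (-Real.log (p j (ω j)) - shannonEntropy (p j)))
      =o[atTop] fun n => (n : ℝ) := by
  set X : ∀ _ : ℕ, (∀ j, α j) → ℝ := fun j ω => -Real.log (p j (ω j))
  have hind : iIndepFun X μ := hμ.iIndepFun_eval hp fun j i => -Real.log (p j i)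
  have hmeas (j : ℕ) : StronglyMeasurable (X j) :=
    ((Measurable.of_discrete (f := fun i => -Real.log (p j i))).comp
      (measurable_pi_apply j)).stronglyMeasurable
  have hmemLp (j : ℕ) : MemLp (X j) 2 μ :=
    (MemLp.of_discrete (f := fun i => -Real.log (p j i))).comp_measurePreserving
      (hμ.measurePreserving_eval hp j)
  have hinv : Summable fun n : ℕ => (((n : ℝ) + 1) ^ 2)⁻¹ := by
    simpa using (summable_nat_add_iff 1).2 (Real.summable_nat_pow_inv.2 one_lt_two)
  have hvar : Summable fun n : ℕ => Var[X n; μ] / ((n : ℝ) + 1) ^ 2 := by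
    refine .of_nonneg_of_le (fun n => div_nonneg (variance_nonneg _ _) (sq_nonneg _))
      (fun n => ?_) ((hcard.mul_left 2).add (hinv.mul_left 8))
    rw [div_pow, ← div_eq_mul_inv, ← mul_div_assoc, ← add_div]
    gcongr
    exact hμ.variance_neg_log_le hp n
  simpa only [hμ.integral_neg_log hp, X] using ae_isLittleO_sum_sub_integral hmeas hmemLp hind hvar

end Bernoulli

section LocalEntropy

lemma isLittleO_shannonEntropy {α : ℕ → Type*} [∀ j, Fintype (α j)] {p : ∀ j, α j → ℝ}
    (hp : ∀ j, p j ∈ stdSimplex ℝ (α j))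
    (hcard : Summable fun n : ℕ => (Real.log (Fintype.card (α n)) / ((n : ℝ) + 1)) ^ 2) :
    (fun n => shannonEntropy (p n)) =o[atTop] fun n => (n : ℝ) := by
  refine IsBigO.trans_isLittleO (isBigO_of_le _ fun n => ?_) (isLittleO_of_summable_div_sq hcard)
  have hnonneg := shannonEntropy_nonneg (hp n)
  have hle := shannonEntropy_le_log_card (hp n)
  rwa [Real.norm_of_nonneg hnonneg, Real.norm_of_nonneg (hnonneg.trans hle)]

/-- The average entropy `(1 / n) ∑_{j < n} H(p j)` of the first `n` vectors. -/
noncomputable def averageEntropy {α : ℕ → Type*} [∀ j, Fintype (α j)] (p : ∀ j, α j → ℝ)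
    (n : ℕ) : ℝ :=
  1 / (n : ℝ) * ∑ j ∈ Finset.range n, shannonEntropy (p j)

variable {α : ℕ → Type*} [∀ j, MeasurableSpace (α j)]

/-- The exponential decay rate `-(1 / n) log μ([ω|(n + k)])` of the measure of cylinders around
`ω`. For the metric `e^{-|ω ∧ ϑ|}` the `n`-th open Bowen ball of radius `ε ≤ 1` is the cylinder
of length `n + k` with `k = ⌊-log ε⌋`. -/
noncomputable def cylinderDecayRate (μ : Measure (∀ j, α j)) (ω : ∀ j, α j) (k n : ℕ) : ℝ :=
  -(1 / (n : ℝ)) * Real.log (μ (PiNat.cylinder ω (n + k))).toReal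

/-- `h` is the lower local entropy of `μ` at `ω`, that is, the limit as `ε → 0⁺` of the lower decay
rates of Bowen balls of radius `ε`. The `liminf` is taken in `ℝ`, so it is `0` if the rates tend
to infinity. -/
def HasLowerLocalEntropy (μ : Measure (∀ j, α j)) (ω : ∀ j, α j) (h : ℝ) : Prop :=
  Tendsto (fun ε : ℝ => liminf (cylinderDecayRate μ ω ⌊-Real.log ε⌋.toNat) atTop) (𝓝[>] 0) (𝓝 h)

/-- `h` is the upper local entropy of `μ` at `ω`, that is, the limit as `ε → 0⁺` of the upper decay
rates of Bowen balls of radius `ε`. The `limsup` is taken in `ℝ`, so it is `0` if the rates are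
unbounded above. -/
def HasUpperLocalEntropy (μ : Measure (∀ j, α j)) (ω : ∀ j, α j) (h : ℝ) : Prop :=
  Tendsto (fun ε : ℝ => limsup (cylinderDecayRate μ ω ⌊-Real.log ε⌋.toNat) atTop) (𝓝[>] 0) (𝓝 h)

variable [∀ j, Fintype (α j)] {p : ∀ j, α j → ℝ} {μ : Measure (∀ j, α j)}

lemma IsBernoulliMeasure.cylinderDecayRate_sub_averageEntropy_eq (hμ : IsBernoulliMeasure p μ)
    {ω : ∀ j, α j} (hω : ∀ j, 0 < p j (ω j)) (k n : ℕ) :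
    cylinderDecayRate μ ω k n - averageEntropy p n =
      (∑ j ∈ Finset.range (n + k), (-Real.log (p j (ω j)) - shannonEntropy (p j)) +
        ∑ i ∈ Finset.range k, shannonEntropy (p (n + i))) / n := by
  rw [cylinderDecayRate, averageEntropy, neg_mul_comm, hμ.neg_log_cylinder hω,
    Finset.sum_sub_distrib, Finset.sum_range_add (fun j => shannonEntropy (p j)) n k]
  ring

theorem IsBernoulliMeasure.ae_tendsto_cylinderDecayRate_sub_averageEntropy
    [∀ j, MeasurableSingletonClass (α j)] (hμ : IsBernoulliMeasure p μ)
    (hp : ∀ j, p j ∈ stdSimplex ℝ (α j))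
    (hcard : Summable fun n : ℕ => (Real.log (Fintype.card (α n)) / ((n : ℝ) + 1)) ^ 2) :
    ∀ᵐ ω ∂μ, ∀ k,
      Tendsto (fun n => cylinderDecayRate μ ω k n - averageEntropy p n) atTop (𝓝 0) := by
  have htail (k : ℕ) : (fun n => ∑ i ∈ Finset.range k, shannonEntropy (p (n + i)))
      =o[atTop] fun n => (n : ℝ) :=
    .fun_sum fun i _ => isLittleO_natCast_comp_add (isLittleO_shannonEntropy hp hcard) i
  filter_upwards [hμ.ae_forall_pos hp, hμ.ae_isLittleO_sum_neg_log_sub_shannonEntropy hp hcard]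
    with ω hpos hω k
  simp only [hμ.cylinderDecayRate_sub_averageEntropy_eq hpos]
  exact ((isLittleO_natCast_comp_add hω k).add (htail k)).tendsto_div_nhds_zero

end LocalEntropy

theorem stmt7_general {α : ℕ → Type*} [∀ j, Fintype (α j)] [∀ j, MeasurableSpace (α j)]
    [∀ j, MeasurableSingletonClass (α j)] {p : ∀ j, α j → ℝ} {μ : Measure (∀ j, α j)}
    (hμ : IsBernoulliMeasure p μ) (hp : ∀ j, p j ∈ stdSimplex ℝ (α j))
    (hcard : Summable fun n : ℕ => (Real.log (Fintype.card (α n)) / ((n : ℝ) + 1)) ^ 2) :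
    ∀ᵐ ω ∂μ, HasLowerLocalEntropy μ ω (liminf (averageEntropy p) atTop) ∧
      HasUpperLocalEntropy μ ω (limsup (averageEntropy p) atTop) := by
  filter_upwards [hμ.ae_tendsto_cylinderDecayRate_sub_averageEntropy hp hcard] with ω hω
  constructor
  · simp only [HasLowerLocalEntropy, liminf_eq_of_tendsto_sub_zero (hω _), tendsto_const_nhds]
  · simp only [HasUpperLocalEntropy, limsup_eq_of_tendsto_sub_zero (hω _), tendsto_const_nhds]

/-- Let `μ` be the nonautonomous Bernoulli measure on `Σ_0^∞(m)` generated by positive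
probability vectors `p_j`, and suppose `lim_n m_n / n^{1-α} < 1` for some `α > 0`.
Then for `μ`-a.e. `ω`, the lower local entropy (the `ε → 0⁺` limit of
`liminf_n -(1/n) log μ([ω|(n+⌊-log ε⌋)])`) equals `liminf_n (1/n) ∑_{j<n} H(p_j)`,
and the upper local entropy equals the corresponding `limsup`, where
`H(p_j) = -∑_i p_{j,i} log p_{j,i}`. -/
theorem stmt7 (m : ℕ → ℕ) (hm : ∀ k, 2 ≤ m k)
    (p : ∀ j : ℕ, Fin (m j) → ℝ) (hp : ∀ j i, 0 < p j i) (hsum : ∀ j, ∑ i, p j i = 1)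
    (μ : Measure (∀ j : ℕ, Fin (m j)))
    (hμ : ∀ (n : ℕ) (u : ∀ j : Fin n, Fin (m j)),
      μ {ω | ∀ j : Fin n, ω j = u j} = ∏ j : Fin n, ENNReal.ofReal (p j (u j)))
    (hα : ∃ α : ℝ, 0 < α ∧ ∃ L : ℝ, L < 1 ∧
      Tendsto (fun n : ℕ => (m n : ℝ) / (n : ℝ) ^ ((1 : ℝ) - α)) atTop (nhds L)) :
    ∀ᵐ ω ∂μ,
      Tendsto (fun ε : ℝ =>
          liminf (fun n : ℕ => -(1 / (n : ℝ)) *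
            Real.log ((μ {ϑ | ∀ j < n + (⌊-Real.log ε⌋).toNat, ϑ j = ω j}).toReal)) atTop)
        (nhdsWithin 0 (Set.Ioi 0))
        (nhds (liminf (fun n : ℕ =>
          (1 / (n : ℝ)) * ∑ j ∈ Finset.range n, -∑ i, p j i * Real.log (p j i)) atTop)) ∧
      Tendsto (fun ε : ℝ =>
          limsup (fun n : ℕ => -(1 / (n : ℝ)) *
            Real.log ((μ {ϑ | ∀ j < n + (⌊-Real.log ε⌋).toNat, ϑ j = ω j}).toReal)) atTop)
        (nhdsWithin 0 (Set.Ioi 0))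
        (nhds (limsup (fun n : ℕ =>
          (1 / (n : ℝ)) * ∑ j ∈ Finset.range n, -∑ i, p j i * Real.log (p j i)) atTop)) := by
  obtain ⟨α, -, L, -, hL⟩ := hα
  have hcard := summable_log_div_sq_of_isBigO_rpow (isBigO_rpow_of_tendsto_div hL)
  exact stmt7_general (isBernoulliMeasure_of_forall_fin hμ)
    (fun j => ⟨fun i => (hp j i).le, hsum j⟩) (by simpa only [Fintype.card_fin] using hcard)
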